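/- Space distance of the deformed code: with the deformed code construction, let d be the distance of the original CSS code, and let h ≥ 0 be a real number such that for every nonempty subset S ⊆ V with 2|S| ≤ |V|, the number of edges of G with exactly one endpoint in S is at least h·|S| (a Cheeger-type expansion bound for G). Then every vector w ∈ 𝔽₂^{n+|E|} satisfying either (H'_Z w = 0 and w is not in the row space of H'_X) or (H'_X w = 0 and w is not in the row space of H'_Z) has Hamming weight at least min(1, h)·d. That is, the distance d' of the deformed code satisfies d' ≥ min(h(G), 1)·d. -/

import Mathlib

open Finset

variable {V : Type*} [Fintype V] [DecidableEq V]

/-- The boundary map `∂ : 𝔽₂^E → 𝔽₂^V` of a simple graph, sending the indicator of an edge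
to the sum of the indicators of its endpoints. -/
def bd (G : SimpleGraph V) [Fintype G.edgeSet] :
    (G.edgeSet → ZMod 2) →ₗ[ZMod 2] (V → ZMod 2) where
  toFun x := fun v => ∑ e : G.edgeSet, if v ∈ (e : Sym2 V) then x e else 0
  map_add' x y := by
    funext v
    simp only [Pi.add_apply]
    rw [← Finset.sum_add_distrib]
    exact Finset.sum_congr rfl fun e _ => by split <;> simp
  map_smul' r x := by
    funext v
    simp only [Pi.smul_apply, smul_eq_mul, RingHom.id_apply]
    rw [Finset.mul_sum]
    exact Finset.sum_congr rfl fun e _ => by split <;> simp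

/-- The coboundary map `δ : 𝔽₂^V → 𝔽₂^E` of a simple graph (the transpose of `∂`):
`(δ c) e = c u + c v` where `u, v` are the endpoints of `e`. -/
def cobd (G : SimpleGraph V) [Fintype G.edgeSet] :
    (V → ZMod 2) →ₗ[ZMod 2] (G.edgeSet → ZMod 2) where
  toFun c := fun e => ∑ v : V, if v ∈ (e : Sym2 V) then c v else 0
  map_add' x y := by
    funext e
    simp only [Pi.add_apply]
    rw [← Finset.sum_add_distrib]
    exact Finset.sum_congr rfl fun v _ => by split <;> simp
  map_smul' r x := by
    funext e
    simp only [Pi.smul_apply, smul_eq_mul, RingHom.id_apply]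
    rw [Finset.mul_sum]
    exact Finset.sum_congr rfl fun v _ => by split <;> simp

/-- The Gauss's law row `a_v = (1_v, δ 1_v) ∈ 𝔽₂^n × 𝔽₂^E` of the deformed `X`-check
matrix, for a vertex `v` of the graph `G` on the support of the logical `ℓ`. -/
def gaussRow {n : ℕ} {ℓ : Fin n → ZMod 2} (G : SimpleGraph {i : Fin n // ℓ i = 1})
    [Fintype G.edgeSet] (v : {i : Fin n // ℓ i = 1}) : (Fin n ⊕ G.edgeSet) → ZMod 2 :=
  Sum.elim (fun i => if i = v.1 then 1 else 0) (cobd G (fun w => if w = v then 1 else 0))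

/-- The deformed `X`-check matrix `H'_X`: the rows of `H_X` padded with zeros on the edge
coordinates, together with the Gauss's law rows `a_v` for the vertices of `G`. -/
def deformedHX {n : ℕ} {rX : Type*} (HX : Matrix rX (Fin n) (ZMod 2))
    {ℓ : Fin n → ZMod 2} (G : SimpleGraph {i : Fin n // ℓ i = 1}) [Fintype G.edgeSet] :
    Matrix (rX ⊕ {i : Fin n // ℓ i = 1}) (Fin n ⊕ G.edgeSet) (ZMod 2) :=
  Matrix.of (Sum.elim (fun j => Sum.elim (fun i => HX j i) 0) (fun v => gaussRow G v))

/-- The deformed `Z`-check matrix `H'_Z`: the rows `(z, γ_z)` for the rows `z` of `H_Z`,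
together with the cycle rows `(0, p)` for the rows `p` of the cycle-basis matrix `N`. -/
def deformedHZ {n : ℕ} {rZ rN : Type*} (HZ : Matrix rZ (Fin n) (ZMod 2))
    {ℓ : Fin n → ZMod 2} (G : SimpleGraph {i : Fin n // ℓ i = 1}) [Fintype G.edgeSet]
    (γ : rZ → G.edgeSet → ZMod 2) (N : rN → G.edgeSet → ZMod 2) :
    Matrix (rZ ⊕ rN) (Fin n ⊕ G.edgeSet) (ZMod 2) :=
  Matrix.of (Sum.elim (fun z => Sum.elim (fun i => HZ z i) (γ z)) (fun p => Sum.elim 0 (N p)))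

/-!
An `X`-type logical `(x, y)` of the deformed code commutes with every cycle check, so its edge part
`y` is orthogonal to `ker ∂` and hence `y = δ c` for some `c`. Multiplying by the corresponding
Gauss checks moves it to `x + c`, which is a logical of the original code, so `d ≤ |x| + |c|`. Since
`δ 1 = 0`, one may replace `c` by its complement and assume `2|c| ≤ |V|`; expansion then yields
`h |c| ≤ |δ c| = |y|`, that is, `min(1, h) d ≤ |x| + |y|`. A `Z`-type logical of the deformed code
restricts directly to a `Z`-type logical of the original one.
-/

section Development

open scoped Matrix

section HammingWeight

variable {α β K : Type*} [Fintype α] [Fintype β] [DecidableEq K]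

theorem hammingNorm_sumElim [Zero K] (x : α → K) (y : β → K) :
    hammingNorm (Sum.elim x y) = hammingNorm x + hammingNorm y := by
  simp only [hammingNorm, Finset.card_filter, Fintype.sum_sum_type]
  rfl

theorem hammingNorm_add_le [AddGroup K] (x y : α → K) :
    hammingNorm (x + y) ≤ hammingNorm x + hammingNorm y := by
  simpa [hammingDist_eq_hammingNorm] using hammingDist_triangle (-x) 0 y

theorem hammingNorm_extend_zero [Zero K] {f : α → β} (hf : f.Injective) (c : α → K) :
    hammingNorm (Function.extend f c 0) = hammingNorm c := by
  simp only [hammingNorm, Finset.card_filter]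
  refine (Fintype.sum_of_injective f hf _ _ (fun b hb => ?_) fun a => ?_).symm
  · simp [Function.extend_apply' _ _ _ hb]
  · rw [hf.extend_apply]

theorem hammingNorm_add_hammingNorm_add_one (c : α → ZMod 2) :
    hammingNorm c + hammingNorm (c + 1) = Fintype.card α := by
  have add_one_ne_zero_iff : ∀ a : ZMod 2, a + 1 ≠ 0 ↔ ¬ a ≠ 0 := by decide
  simp only [hammingNorm, Pi.add_apply, Pi.one_apply, add_one_ne_zero_iff,
    Finset.card_filter_add_card_filter_not, Finset.card_univ]

end HammingWeight

section DotProduct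

variable {α β K : Type*} [Fintype α] [Fintype β]

theorem dotProduct_extend_zero [NonUnitalNonAssocSemiring K] {f : α → β} (hf : f.Injective)
    (z : β → K) (c : α → K) : z ⬝ᵥ Function.extend f c 0 = (z ∘ f) ⬝ᵥ c := by
  refine (Fintype.sum_of_injective f hf _ _ (fun b hb => ?_) fun a => ?_).symm
  · simp [Function.extend_apply' _ _ _ hb]
  · rw [hf.extend_apply, Function.comp_apply]

theorem mem_range_of_forall_ker_dotProduct_eq_zero [Field K] {f : (α → K) →ₗ[K] (β → K)}
    {g : (β → K) →ₗ[K] (α → K)} (adjoint : ∀ y c, y ⬝ᵥ g c = f y ⬝ᵥ c) {x : α → K}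
    (hx : ∀ y ∈ LinearMap.ker f, x ⬝ᵥ y = 0) : x ∈ LinearMap.range g := by
  classical
  have mem_range_dualMap : dotProductEquiv K α x ∈ LinearMap.range f.dualMap := by
    rw [LinearMap.range_dualMap_eq_dualAnnihilator_ker, Submodule.mem_dualAnnihilator]
    exact hx
  obtain ⟨ψ, hψ⟩ := mem_range_dualMap
  obtain ⟨c, rfl⟩ := (dotProductEquiv K β).surjective ψ
  refine ⟨c, dotProduct_eq _ _ fun y => ?_⟩
  calc g c ⬝ᵥ y = c ⬝ᵥ f y := by rw [dotProduct_comm, adjoint, dotProduct_comm]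
    _ = x ⬝ᵥ y := LinearMap.congr_fun hψ y

end DotProduct

section Graph

theorem sum_ite_mem_sym2_mk {M : Type*} [AddCommMonoid M] {a b : V} (hab : a ≠ b) (f : V → M) :
    (∑ v, if v ∈ s(a, b) then f v else 0) = f a + f b := by
  have filter_eq : (univ.filter fun v => v ∈ s(a, b)) = {a, b} := by ext; simp
  rw [← Finset.sum_filter, filter_eq, Finset.sum_pair hab]

variable (G : SimpleGraph V) [Fintype G.edgeSet]

theorem cobd_apply_mk (c : V → ZMod 2) {a b : V} (hab : G.Adj a b) :
    cobd G c ⟨s(a, b), hab⟩ = c a + c b :=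
  sum_ite_mem_sym2_mk hab.ne c

theorem cobd_one : cobd G 1 = 0 := by
  funext ⟨e, he⟩
  induction e using Sym2.ind with
  | _ a b => exact (cobd_apply_mk G 1 he).trans (CharTwo.add_self_eq_zero 1)

theorem dotProduct_cobd (y : G.edgeSet → ZMod 2) (c : V → ZMod 2) :
    y ⬝ᵥ cobd G c = bd G y ⬝ᵥ c := by
  simp only [dotProduct, cobd, bd, LinearMap.coe_mk, AddHom.coe_mk, Finset.mul_sum,
    Finset.sum_mul, mul_ite, ite_mul, mul_zero, zero_mul]
  exact Finset.sum_comm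

theorem exists_cobd_eq_and_two_mul_hammingNorm_le (c : V → ZMod 2) :
    ∃ c', cobd G c' = cobd G c ∧ 2 * hammingNorm c' ≤ Fintype.card V := by
  have complement := hammingNorm_add_hammingNorm_add_one c
  rcases le_total (2 * hammingNorm c) (Fintype.card V) with small | large
  · exact ⟨c, rfl, small⟩
  · exact ⟨c + 1, by rw [map_add, cobd_one, add_zero], by omega⟩

/-- The edge boundary of a vertex set `S`: the edges with exactly one endpoint in `S`. -/
def edgeBoundary (S : Finset V) : Finset G.edgeSet :=
  univ.filter fun e => (univ.filter fun v => v ∈ (e : Sym2 V) ∧ v ∈ S).card = 1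

/-- A Cheeger-type bound: `h` is at most the edge expansion `|∂S| / |S|` of every nonempty vertex
set `S` containing at most half of the vertices. -/
def HasEdgeExpansion (h : ℝ) : Prop :=
  ∀ S : Finset V, S.Nonempty → 2 * S.card ≤ Fintype.card V →
    h * S.card ≤ ((edgeBoundary G S).card : ℝ)

theorem mem_edgeBoundary_support_iff (c : V → ZMod 2) (e : G.edgeSet) :
    e ∈ edgeBoundary G (univ.filter fun v => c v ≠ 0) ↔ cobd G c e ≠ 0 := by
  obtain ⟨e, he⟩ := e
  induction e using Sym2.ind with
  | _ a b =>
    have one_nonzero_iff : ∀ s t : ZMod 2,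
        (if s ≠ 0 then 1 else 0) + (if t ≠ 0 then 1 else 0) = 1 ↔ s + t ≠ 0 := by decide
    rw [cobd_apply_mk G c he, ← one_nonzero_iff]
    simp only [edgeBoundary, Finset.mem_filter, Finset.mem_univ, true_and, Finset.card_filter,
      ite_and, sum_ite_mem_sym2_mk he.ne]

theorem card_edgeBoundary_support (c : V → ZMod 2) :
    (edgeBoundary G (univ.filter fun v => c v ≠ 0)).card = hammingNorm (cobd G c) := by
  refine congrArg Finset.card (Finset.ext fun e => ?_)
  rw [mem_edgeBoundary_support_iff, Finset.mem_filter_univ]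

variable {G}

theorem HasEdgeExpansion.mul_hammingNorm_le {h : ℝ} (hG : HasEdgeExpansion G h) {c : V → ZMod 2}
    (hc : 2 * hammingNorm c ≤ Fintype.card V) :
    h * hammingNorm c ≤ hammingNorm (cobd G c) := by
  rcases (univ.filter fun v => c v ≠ 0).eq_empty_or_nonempty with empty | nonempty
  · simp [hammingNorm, empty]
  · rw [← card_edgeBoundary_support]
    exact hG _ nonempty hc

theorem mem_range_cobd_of_mulVec_eq_zero {ι : Type*} {N : Matrix ι G.edgeSet (ZMod 2)}
    (hN : LinearMap.ker (bd G) ≤ Submodule.span (ZMod 2) (Set.range N))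
    {y : G.edgeSet → ZMod 2} (hy : N *ᵥ y = 0) : y ∈ LinearMap.range (cobd G) := by
  refine mem_range_of_forall_ker_dotProduct_eq_zero (dotProduct_cobd G) fun p hp => ?_
  have span_le : Submodule.span (ZMod 2) (Set.range N) ≤
      LinearMap.ker (dotProductEquiv (ZMod 2) G.edgeSet y) := by
    rw [Submodule.span_le]
    rintro _ ⟨i, rfl⟩
    exact (dotProduct_comm _ _).trans (congrFun hy i)
  exact span_le (hN hp)

end Graph

/-- A vector `w` is logical for the checks `H` modulo the stabilizers generated by the rows of `S`
if it satisfies all checks and is not a stabilizer. For a CSS code, the `X`-type logicals are given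
by `IsLogical H_Z H_X` and the `Z`-type ones by `IsLogical H_X H_Z`. -/
def IsLogical {ι κ α R : Type*} [Fintype κ] [Fintype α] [CommSemiring R] (H : Matrix ι α R)
    (S : Matrix κ α R) (w : α → R) : Prop :=
  H *ᵥ w = 0 ∧ w ∉ LinearMap.range S.vecMulLinear

section DeformedCode

variable {n : ℕ} {rX rZ rN : Type*} {ℓ : Fin n → ZMod 2}
  (HX : Matrix rX (Fin n) (ZMod 2)) (HZ : Matrix rZ (Fin n) (ZMod 2))
  (G : SimpleGraph {i : Fin n // ℓ i = 1}) [Fintype G.edgeSet]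
  (γ : rZ → G.edgeSet → ZMod 2) (N : rN → G.edgeSet → ZMod 2)

theorem gaussRow_dotProduct_sumElim (v : {i : Fin n // ℓ i = 1}) (x : Fin n → ZMod 2)
    (y : G.edgeSet → ZMod 2) : gaussRow G v ⬝ᵥ Sum.elim x y = x v + bd G y v := by
  rw [gaussRow, sumElim_dotProduct_sumElim, dotProduct_comm _ y, dotProduct_cobd]
  simp [dotProduct]

theorem sum_smul_gaussRow (c : {i : Fin n // ℓ i = 1} → ZMod 2) :
    ∑ v, c v • gaussRow G v = Sum.elim (Function.extend Subtype.val c 0) (cobd G c) := by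
  funext j
  rcases j with i | e
  · have row_apply := dotProduct_extend_zero Subtype.val_injective (Pi.single i 1) c
    rw [single_one_dotProduct] at row_apply
    simp [gaussRow, row_apply, dotProduct, Pi.single_apply, eq_comm]
  · have eq_sum : c = ∑ v, c v • fun u => if u = v then 1 else 0 := by
      funext u; simp
    conv_rhs => rw [eq_sum]
    simp [gaussRow]

theorem deformedHX_mulVec_sumElim (x : Fin n → ZMod 2) (y : G.edgeSet → ZMod 2) :
    deformedHX HX G *ᵥ Sum.elim x y = Sum.elim (HX *ᵥ x) (x ∘ Subtype.val + bd G y) := by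
  funext j
  rcases j with j | v
  · exact (sumElim_dotProduct_sumElim ..).trans (by simp [Matrix.mulVec])
  · exact gaussRow_dotProduct_sumElim G v x y

theorem sumElim_vecMul_deformedHX [Fintype rX] (a : rX → ZMod 2)
    (c : {i : Fin n // ℓ i = 1} → ZMod 2) :
    Sum.elim a c ᵥ* deformedHX HX G =
      Sum.elim (a ᵥ* HX + Function.extend Subtype.val c 0) (cobd G c) := by
  have padded_rows : ∑ j, a j • Sum.elim (HX j) (0 : G.edgeSet → ZMod 2) =
      Sum.elim (a ᵥ* HX) 0 := by
    funext j
    rcases j with i | e <;> simp [Matrix.vecMul, dotProduct]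
  calc Sum.elim a c ᵥ* deformedHX HX G
      = ∑ j, a j • Sum.elim (HX j) (0 : G.edgeSet → ZMod 2) + ∑ v, c v • gaussRow G v := by
        rw [Matrix.vecMul_eq_sum, Fintype.sum_sum_type]; rfl
    _ = _ := by rw [padded_rows, sum_smul_gaussRow, ← Sum.elim_add_add, zero_add]

theorem deformedHZ_eq_fromBlocks :
    deformedHZ HZ G γ N = Matrix.fromBlocks HZ (Matrix.of γ) 0 (Matrix.of N) := by
  ext (z | p) (i | e) <;> rfl

theorem deformedHZ_mulVec_sumElim (x : Fin n → ZMod 2) (y : G.edgeSet → ZMod 2) :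
    deformedHZ HZ G γ N *ᵥ Sum.elim x y =
      Sum.elim (HZ *ᵥ x + Matrix.of γ *ᵥ y) (Matrix.of N *ᵥ y) := by
  rw [deformedHZ_eq_fromBlocks, Matrix.fromBlocks_mulVec]
  simp

theorem sumElim_vecMul_deformedHZ [Fintype rZ] [Fintype rN] (a : rZ → ZMod 2) (b : rN → ZMod 2) :
    Sum.elim a b ᵥ* deformedHZ HZ G γ N =
      Sum.elim (a ᵥ* HZ) (a ᵥ* Matrix.of γ + b ᵥ* Matrix.of N) := by
  rw [deformedHZ_eq_fromBlocks, Matrix.vecMul_fromBlocks]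
  simp

variable {HX HZ G γ N}

theorem mulVec_extend_zero_eq_mulVec_cobd (hγ : ∀ z, bd G (γ z) = fun v => HZ z v.1)
    (c : {i : Fin n // ℓ i = 1} → ZMod 2) :
    HZ *ᵥ Function.extend Subtype.val c 0 = Matrix.of γ *ᵥ cobd G c := by
  funext z
  calc HZ z ⬝ᵥ Function.extend Subtype.val c 0
      = bd G (γ z) ⬝ᵥ c := by rw [dotProduct_extend_zero Subtype.val_injective, hγ]; rfl
    _ = γ z ⬝ᵥ cobd G c := (dotProduct_cobd G _ _).symm

theorem bd_vecMul [Fintype rZ] (hγ : ∀ z, bd G (γ z) = fun v => HZ z v.1) (a : rZ → ZMod 2) :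
    bd G (a ᵥ* Matrix.of γ) = (a ᵥ* HZ) ∘ Subtype.val := by
  have vecMul_eq : a ᵥ* Matrix.of γ = ∑ z, a z • γ z := Matrix.vecMul_eq_sum ..
  funext v
  simp [vecMul_eq, Matrix.vecMul_eq_sum, hγ]

theorem IsLogical.add_extend_of_deformed [Fintype rX]
    (hγ : ∀ z, bd G (γ z) = fun v => HZ z v.1) {x : Fin n → ZMod 2}
    {c : {i : Fin n // ℓ i = 1} → ZMod 2}
    (hw : IsLogical (deformedHZ HZ G γ N) (deformedHX HX G) (Sum.elim x (cobd G c))) :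
    IsLogical HZ HX (x + Function.extend Subtype.val c 0) := by
  obtain ⟨checks, not_stabilizer⟩ := hw
  constructor
  · rw [Matrix.mulVec_add, mulVec_extend_zero_eq_mulVec_cobd hγ]
    rw [deformedHZ_mulVec_sumElim] at checks
    exact congrArg (· ∘ Sum.inl) checks
  · rintro ⟨a, ha⟩
    refine not_stabilizer ⟨Sum.elim a c, ?_⟩
    rw [Matrix.vecMulLinear_apply] at ha ⊢
    rw [sumElim_vecMul_deformedHX, ha, add_assoc, ZModModule.add_self, add_zero]

theorem IsLogical.of_deformed [Fintype rZ] [Fintype rN]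
    (hγ : ∀ z, bd G (γ z) = fun v => HZ z v.1)
    (hN : LinearMap.ker (bd G) ≤ Submodule.span (ZMod 2) (Set.range N))
    {x : Fin n → ZMod 2} {y : G.edgeSet → ZMod 2}
    (hw : IsLogical (deformedHX HX G) (deformedHZ HZ G γ N) (Sum.elim x y)) :
    IsLogical HX HZ x := by
  obtain ⟨checks, not_stabilizer⟩ := hw
  rw [deformedHX_mulVec_sumElim] at checks
  refine ⟨congrArg (· ∘ Sum.inl) checks, ?_⟩
  rintro ⟨a, rfl⟩
  have gauss : (a ᵥ* HZ) ∘ Subtype.val + bd G y = 0 := congrArg (· ∘ Sum.inr) checks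
  have cycle : a ᵥ* Matrix.of γ + y ∈ LinearMap.ker (bd G) := by
    rw [LinearMap.mem_ker, map_add, bd_vecMul hγ, gauss]
  obtain ⟨b, hb⟩ := (Submodule.mem_span_range_iff_exists_fun _).1 (hN cycle)
  have vecMul_eq : b ᵥ* Matrix.of N = a ᵥ* Matrix.of γ + y := by
    rw [← hb, Matrix.vecMul_eq_sum]; rfl
  refine not_stabilizer ⟨Sum.elim a b, ?_⟩
  rw [Matrix.vecMulLinear_apply, sumElim_vecMul_deformedHZ, vecMul_eq, ← add_assoc,
    ZModModule.add_self, zero_add, Matrix.vecMulLinear_apply]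

theorem IsLogical.exists_cobd_eq_and_le_of_deformed [Fintype rX]
    (hγ : ∀ z, bd G (γ z) = fun v => HZ z v.1)
    (hN : LinearMap.ker (bd G) ≤ Submodule.span (ZMod 2) (Set.range N))
    {d : ℕ} (hd : ∀ u, IsLogical HZ HX u → d ≤ hammingNorm u)
    {x : Fin n → ZMod 2} {y : G.edgeSet → ZMod 2}
    (hw : IsLogical (deformedHZ HZ G γ N) (deformedHX HX G) (Sum.elim x y)) :
    ∃ c, cobd G c = y ∧ 2 * hammingNorm c ≤ Fintype.card {i : Fin n // ℓ i = 1} ∧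
      d ≤ hammingNorm x + hammingNorm c := by
  have cycle_checks : Matrix.of N *ᵥ y = 0 := by
    have checks := hw.1
    rw [deformedHZ_mulVec_sumElim] at checks
    exact congrArg (· ∘ Sum.inr) checks
  obtain ⟨c₀, rfl⟩ := mem_range_cobd_of_mulVec_eq_zero hN cycle_checks
  obtain ⟨c, hc, small⟩ := exists_cobd_eq_and_two_mul_hammingNorm_le G c₀
  refine ⟨c, hc, small, ?_⟩
  rw [← hc] at hw
  calc d ≤ hammingNorm (x + Function.extend Subtype.val c 0) := hd _ (hw.add_extend_of_deformed hγ)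
    _ ≤ hammingNorm x + hammingNorm (Function.extend Subtype.val c 0) := hammingNorm_add_le _ _
    _ = hammingNorm x + hammingNorm c := by rw [hammingNorm_extend_zero Subtype.val_injective]

theorem HasEdgeExpansion.min_one_mul_le_hammingNorm_of_isLogical [Fintype rX]
    (hγ : ∀ z, bd G (γ z) = fun v => HZ z v.1)
    (hN : LinearMap.ker (bd G) ≤ Submodule.span (ZMod 2) (Set.range N))
    {d : ℕ} (hd : ∀ u, IsLogical HZ HX u → d ≤ hammingNorm u)
    {h : ℝ} (hh : 0 ≤ h) (hG : HasEdgeExpansion G h)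
    {x : Fin n → ZMod 2} {y : G.edgeSet → ZMod 2}
    (hw : IsLogical (deformedHZ HZ G γ N) (deformedHX HX G) (Sum.elim x y)) :
    min 1 h * d ≤ hammingNorm (Sum.elim x y) := by
  obtain ⟨c, rfl, small, d_le⟩ := hw.exists_cobd_eq_and_le_of_deformed hγ hN hd
  calc min 1 h * d
      ≤ min 1 h * (hammingNorm x + hammingNorm c) := by gcongr; exact_mod_cast d_le
    _ = min 1 h * hammingNorm x + min 1 h * hammingNorm c := mul_add ..
    _ ≤ 1 * hammingNorm x + h * hammingNorm c := by
        gcongr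
        exacts [min_le_left .., min_le_right ..]
    _ ≤ hammingNorm x + hammingNorm (cobd G c) := by
        rw [one_mul]
        gcongr
        exact hG.mul_hammingNorm_le small
    _ = hammingNorm (Sum.elim x (cobd G c)) := by rw [hammingNorm_sumElim, Nat.cast_add]

theorem IsLogical.le_hammingNorm_of_deformed [Fintype rZ] [Fintype rN]
    (hγ : ∀ z, bd G (γ z) = fun v => HZ z v.1)
    (hN : LinearMap.ker (bd G) ≤ Submodule.span (ZMod 2) (Set.range N))
    {d : ℕ} (hd : ∀ u, IsLogical HX HZ u → d ≤ hammingNorm u)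
    {x : Fin n → ZMod 2} {y : G.edgeSet → ZMod 2}
    (hw : IsLogical (deformedHX HX G) (deformedHZ HZ G γ N) (Sum.elim x y)) :
    d ≤ hammingNorm (Sum.elim x y) :=
  calc d ≤ hammingNorm x := hd x (hw.of_deformed hγ hN)
    _ ≤ hammingNorm x + hammingNorm y := Nat.le_add_right ..
    _ = hammingNorm (Sum.elim x y) := (hammingNorm_sumElim x y).symm

end DeformedCode

end Development

/-- **Space distance of the deformed code.** Let `d` be the distance of the
original CSS code (i.e. a lower bound on the Hamming weight of every original logical), and
let `h ≥ 0` satisfy a Cheeger-type expansion bound for `G`: every nonempty `S ⊆ V` with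
`2|S| ≤ |V|` has at least `h·|S|` edges with exactly one endpoint in `S`. Then every
logical operator of the deformed code (X-type or Z-type) has Hamming weight at least
`min(1, h)·d`, i.e. `d' ≥ min(h(G), 1)·d`. -/
theorem deformed_code_space_distance {n : ℕ} {rX rZ rN : Type*}
    [Fintype rX] [Fintype rZ] [Fintype rN]
    (HX : Matrix rX (Fin n) (ZMod 2)) (HZ : Matrix rZ (Fin n) (ZMod 2))
    (hCSS : HX * HZ.transpose = 0)
    (ℓ : Fin n → ZMod 2) (hℓZ : HZ.mulVec ℓ = 0)
    (hℓX : ℓ ∉ LinearMap.range HX.vecMulLinear)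
    (G : SimpleGraph {i : Fin n // ℓ i = 1}) [Fintype G.edgeSet] (hG : G.Connected)
    (γ : rZ → G.edgeSet → ZMod 2)
    (hγ : ∀ z : rZ, bd G (γ z) = fun v => HZ z v.1)
    (N : rN → G.edgeSet → ZMod 2)
    (hN0 : ∀ p : rN, bd G (N p) = 0)
    (hNli : LinearIndependent (ZMod 2) N)
    (hNspan : ∀ y : G.edgeSet → ZMod 2, bd G y = 0 →
      y ∈ Submodule.span (ZMod 2) (Set.range N))
    (d : ℕ)
    (hd : ∀ w : Fin n → ZMod 2,
      ((HZ.mulVec w = 0 ∧ w ∉ LinearMap.range HX.vecMulLinear) ∨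
       (HX.mulVec w = 0 ∧ w ∉ LinearMap.range HZ.vecMulLinear)) →
      d ≤ (Finset.univ.filter (fun i => w i ≠ 0)).card)
    (h : ℝ) (hh : 0 ≤ h)
    (hexp : ∀ S : Finset {i : Fin n // ℓ i = 1}, S.Nonempty →
      2 * S.card ≤ Fintype.card {i : Fin n // ℓ i = 1} →
      h * S.card ≤
        ((Finset.univ.filter (fun e : G.edgeSet =>
          (Finset.univ.filter (fun v => v ∈ (e : Sym2 {i : Fin n // ℓ i = 1}) ∧ v ∈ S)).card
            = 1)).card : ℝ)) :
    ∀ w : (Fin n ⊕ G.edgeSet) → ZMod 2,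
      (((deformedHZ HZ G γ N).mulVec w = 0 ∧
          w ∉ LinearMap.range (deformedHX HX G).vecMulLinear) ∨
       ((deformedHX HX G).mulVec w = 0 ∧
          w ∉ LinearMap.range (deformedHZ HZ G γ N).vecMulLinear)) →
      min 1 h * d ≤ ((Finset.univ.filter (fun j => w j ≠ 0)).card : ℝ) := by
  intro w hw
  obtain ⟨x, y, rfl⟩ : ∃ x y, w = Sum.elim x y := ⟨_, _, (Sum.elim_comp_inl_inr w).symm⟩
  rcases hw with hX | hZ
  · have hdX : ∀ u, IsLogical HZ HX u → d ≤ hammingNorm u := fun u hu => hd u (.inl hu)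
    exact HasEdgeExpansion.min_one_mul_le_hammingNorm_of_isLogical hγ hNspan hdX hh hexp hX
  · have hdZ : ∀ u, IsLogical HX HZ u → d ≤ hammingNorm u := fun u hu => hd u (.inr hu)
    have d_le : d ≤ hammingNorm (Sum.elim x y) :=
      IsLogical.le_hammingNorm_of_deformed hγ hNspan hdZ hZ
    calc min 1 h * d ≤ 1 * d := by gcongr; exact min_le_left ..
      _ ≤ hammingNorm (Sum.elim x y) := by rw [one_mul]; exact_mod_cast d_le
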